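/- arXiv:1608.02009 — 2 statements merged into one kernel-verified Lean document; each statement's English description precedes it below -/
import Mathlib

section
/- Let n ≥ 1. The global self-similar Minkowski dimension of the integer lattice points with positive coordinates satisfies dim_LG(ℕⁿ) = n, where ℕⁿ = ℕ × ⋯ × ℕ ⊂ ℝⁿ. -/
open MeasureTheory Metric Filter Set ENNReal NNReal

noncomputable section

/-- Points of `ℝⁿ`. -/
abbrev Pt (n : ℕ) := EuclideanSpace ℝ (Fin n)

/-- The axis-parallel closed cube with lower corner `c` and edge length `r`. -/
def closedCube {n : ℕ} (c : Pt n) (r : ℝ) : Set (Pt n) :=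
  {x | ∀ i, c i ≤ x i ∧ x i ≤ c i + r}

/-- `Ncov r E`: the minimal number of axis-parallel closed cubes of edge length `r`
needed to cover `E` (junk value `0` if no finite cover exists). -/
def Ncov {n : ℕ} (r : ℝ) (E : Set (Pt n)) : ℕ :=
  sInf {m : ℕ | ∃ s : Finset (Pt n), s.card = m ∧ E ⊆ ⋃ c ∈ s, closedCube c r}

/-- Upper Minkowski dimension (intended for bounded sets). -/
def dimM {n : ℕ} (F : Set (Pt n)) : ℝ :=
  limsup (fun r : ℝ => Real.log (Ncov r F) / Real.log (1 / r)) (nhdsWithin 0 (Ioi 0))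

/-- The set of ratios `log N_cov(r, E ∩ B) / log (r_B / r)` over balls `B = B(x, r_B)`
with `N * r ≤ r_B ≤ R`. -/
def locRatios {n : ℕ} (E : Set (Pt n)) (N r R : ℝ) : Set ℝ :=
  {d | ∃ (x : Pt n) (rB : ℝ), 0 < rB ∧ N * r ≤ rB ∧ rB ≤ R ∧
        d = Real.log (Ncov r (E ∩ ball x rB)) / Real.log (rB / r)}

/-- The local self-similar Minkowski dimension. -/
def dimLoc {n : ℕ} (E : Set (Pt n)) : ℝ :=
  liminf (fun N : ℝ =>
    limsup (fun r : ℝ => sSup (locRatios E N r 1)) (nhdsWithin 0 (Ioi 0))) atTop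

/-- The global self-similar Minkowski dimension. -/
def dimGlob {n : ℕ} (E : Set (Pt n)) : ℝ :=
  liminf (fun N : ℝ =>
    sSup {d : ℝ | ∃ r : ℝ, 0 < r ∧ ∃ (x : Pt n) (rB : ℝ), 0 < rB ∧ N * r ≤ rB ∧
      d = Real.log (Ncov r (E ∩ ball x rB)) / Real.log (rB / r)}) atTop

/-- The `Q_α`-energy `Φ_α(u, B(x₀,r)) = |B|^{2α/n-1} ∬_{B×B} |u(x)-u(y)|²/|x-y|^{n+2α}`. -/
def Phi {n : ℕ} (α : ℝ) (u : Pt n → ℝ) (x₀ : Pt n) (r : ℝ) : ℝ≥0∞ :=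
  (volume (ball x₀ r)) ^ (2 * α / (n : ℝ) - 1) *
    ∫⁻ x in ball x₀ r, ∫⁻ y in ball x₀ r,
      ENNReal.ofReal (|u x - u y| ^ 2 / ‖x - y‖ ^ ((n : ℝ) + 2 * α))

/-- The `Q_α`-norm of `u`. -/
def Qnorm {n : ℕ} (α : ℝ) (u : Pt n → ℝ) : ℝ≥0∞ :=
  ⨆ (x₀ : Pt n) (r : ℝ) (_ : 0 < r),
    (ENNReal.ofReal (r ^ (2 * α - (n : ℝ))) *
      ∫⁻ x in ball x₀ r, ∫⁻ y in ball x₀ r,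
        ENNReal.ofReal (|u x - u y| ^ 2 / ‖x - y‖ ^ ((n : ℝ) + 2 * α))) ^ (1/2 : ℝ)

/-- Membership in `Q_α(ℝⁿ)`: `u ∈ L²_loc` and the `Q_α`-norm is finite. -/
def MemQ {n : ℕ} (α : ℝ) (u : Pt n → ℝ) : Prop :=
  LocallyIntegrable (fun x => |u x| ^ 2) volume ∧ Qnorm α u < ⊤

/-- `Ψ_{α,q}(u, B(x₀,r))`. -/
def Psi {n : ℕ} (α q : ℝ) (u : Pt n → ℝ) (x₀ : Pt n) (r : ℝ) : ℝ≥0∞ :=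
  ∑' k : ℕ, ENNReal.ofReal ((2:ℝ) ^ (2 * (k:ℝ) * α)) *
    ((volume (ball x₀ r))⁻¹ * ∫⁻ x in ball x₀ r,
      ⨅ c : ℝ, ((volume (ball x ((2:ℝ) ^ (-(k:ℝ)) * r)))⁻¹ *
        ∫⁻ z in ball x ((2:ℝ) ^ (-(k:ℝ)) * r), ENNReal.ofReal (|u z - c| ^ q)) ^ (2 / q))

/-- The quantity `inf_c ( ⨍_{B(x,ρ)} |u - c|^σ )^{1/σ}`. -/
def oscAvg {n : ℕ} (σ : ℝ) (u : Pt n → ℝ) (x : Pt n) (ρ : ℝ) : ℝ≥0∞ :=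
  ⨅ c : ℝ, ((volume (ball x ρ))⁻¹ *
    ∫⁻ w in ball x ρ, ENNReal.ofReal (|u w - c| ^ σ)) ^ (1/σ)

/-- `f` is `η`-quasisymmetric, where the homeomorphism `η` of `[0,∞)` is encoded as an
order isomorphism of `ℝ≥0`. -/
def IsQS {n : ℕ} (f : Pt n → Pt n) (η : ℝ≥0 ≃o ℝ≥0) : Prop :=
  ∀ x a b : Pt n, x ≠ b →
    nndist (f x) (f a) ≤ η (nndist x a / nndist x b) * nndist (f x) (f b)

/-- The local Muckenhoupt class `A₁(ℝⁿ; S)`: the `A₁` condition holds on every ball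
`B(x₀,r)` with `2r < dist(x₀, S)`. -/
def MemA1 {n : ℕ} (w : Pt n → ℝ) (S : Set (Pt n)) : Prop :=
  ∃ C > 0, ∀ (x₀ : Pt n) (r : ℝ), 0 < r →
    ENNReal.ofReal (2 * r) < EMetric.infEdist x₀ S →
    ⨍ x in ball x₀ r, w x ∂volume ≤ C * essInf w (volume.restrict (ball x₀ r))

/-- `J` is the a.e. Jacobian of `f` (`J = |det Df|` a.e.) and the change-of-variables
formula holds for all nonnegative measurable integrands. -/
def JacobianCOV {n : ℕ} (f : Pt n → Pt n) (J : Pt n → ℝ) : Prop :=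
  (∀ᵐ x ∂(volume : Measure (Pt n)), ∃ D : Pt n →L[ℝ] Pt n,
      HasFDerivAt f D x ∧ J x = |D.det|) ∧
  ∀ g : Pt n → ℝ≥0∞, Measurable g →
    ∫⁻ x, g (f x) * ENNReal.ofReal (J x) = ∫⁻ y, g y

/-- The hyperplane `ℝ^{n-1} × {0}` (the last coordinate vanishes). -/
def Hset (n : ℕ) : Set (Pt n) := {x | ∀ i : Fin n, (i : ℕ) = n - 1 → x i = 0}

/-- The open upper half-space (last coordinate positive). -/
def upperHalf (n : ℕ) : Set (Pt n) := {x | ∀ i : Fin n, (i : ℕ) = n - 1 → 0 < x i}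

/-- The open lower half-space (last coordinate negative). -/
def lowerHalf (n : ℕ) : Set (Pt n) := {x | ∀ i : Fin n, (i : ℕ) = n - 1 → x i < 0}

/-- The hyperbolic length `∫₀¹ |γ'(t)|/dist(γ(t),H) dt` of a curve `γ`. -/
def hypLen {n : ℕ} (H : Set (Pt n)) (γ : ℝ → Pt n) : ℝ :=
  ∫ t in (0:ℝ)..1, ‖deriv γ t‖ / Metric.infDist (γ t) H

/-- The hyperbolic-type distance associated with the set `H`: the infimum of hyperbolic
lengths of differentiable curves joining `z` and `w` in the complement of `H`. -/
def hypDist {n : ℕ} (H : Set (Pt n)) (z w : Pt n) : ℝ :=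
  sInf {L : ℝ | ∃ γ : ℝ → Pt n, γ 0 = z ∧ γ 1 = w ∧
    (∀ t ∈ Icc (0:ℝ) 1, DifferentiableAt ℝ γ t ∧ γ t ∉ H) ∧ L = hypLen H γ}

/-- `L_f(z,t) = sup { |f(z)-f(w)| : |z-w| ≤ t }`. -/
def Lf {n : ℕ} (f : Pt n → Pt n) (z : Pt n) (t : ℝ) : ℝ :=
  sSup ((fun w => dist (f z) (f w)) '' closedBall z t)

/-!
Write `t = r_B / r`. The dimension is the exponent of the largest growth of `N_cov(r, E ∩ B)` as a
power of `t`: multiplicative constants only contribute `O(1 / log t)` to the ratios. A ball of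
radius `r_B` lies in a cube of edge `2 r_B`, which a grid covers with at most `(2t + 1)ⁿ ≤ (3t)ⁿ`
cubes, so the exponent never exceeds `n`. For `ℕⁿ` it is attained at the single scale `r = 1/2`: a
cube of edge less than `1` contains at most one lattice point, so the `Kⁿ` points of `{1, …, K}ⁿ`
need `Kⁿ` cubes, while they all lie in a ball of radius `(n + 1) K`.
-/

section Covering

variable {n : ℕ} {r R : ℝ} {E F : Set (Pt n)}

lemma exists_finset_closedCube_cover (a : Pt n) (L : ℝ) (hr : 0 < r) :
    ∃ s : Finset (Pt n), s.card ≤ (⌊L / r⌋₊ + 1) ^ n ∧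
      closedCube a L ⊆ ⋃ c ∈ s, closedCube c r := by
  classical
  let corner (k : Fin n → Fin (⌊L / r⌋₊ + 1)) : Pt n := WithLp.toLp 2 fun i => a i + k i * r
  refine ⟨Finset.univ.image corner, Finset.card_image_le.trans (by simp), fun x hx => ?_⟩
  have floor_lt (i : Fin n) : ⌊(x i - a i) / r⌋₊ < ⌊L / r⌋₊ + 1 :=
    Nat.lt_succ_of_le <| Nat.floor_mono <| by gcongr; linarith [(hx i).2]
  refine mem_iUnion₂.2 ⟨corner fun i => ⟨_, floor_lt i⟩, by simp, fun i => ?_⟩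
  have lower := Nat.floor_le (div_nonneg (sub_nonneg.2 (hx i).1) hr.le)
  have upper := (Nat.lt_floor_add_one ((x i - a i) / r)).le
  rw [le_div_iff₀ hr] at lower
  rw [div_le_iff₀ hr] at upper
  simp only [corner]
  constructor <;> linarith

lemma ball_subset_closedCube (x : Pt n) (R : ℝ) :
    ball x R ⊆ closedCube (x - WithLp.toLp 2 fun _ => R) (2 * R) := by
  intro y hy i
  have hi : |y i - x i| < R :=
    (PiLp.norm_apply_le (y - x) i).trans_lt (mem_ball_iff_norm.1 hy)
  have := abs_lt.1 hi
  simp only [PiLp.sub_apply]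
  constructor <;> linarith

lemma closedCube_subset_ball (c : Pt n) (hr : 0 < r) :
    closedCube c r ⊆ ball c ((n + 1) * r) := by
  intro x hx
  have coord_le (i : Fin n) : ‖x i - c i‖ ≤ r := by
    rw [Real.norm_eq_abs, abs_le]
    constructor <;> linarith [hx i]
  rw [mem_ball_iff_norm, EuclideanSpace.norm_eq, Real.sqrt_lt' (by positivity)]
  calc ∑ i, ‖(x - c) i‖ ^ 2 ≤ ∑ _i : Fin n, r ^ 2 := by
        gcongr with i
        exact coord_le i
    _ = n * r ^ 2 := by simp
    _ < (n + 1) ^ 2 * r ^ 2 := by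
        gcongr
        nlinarith [(Nat.cast_nonneg n : (0 : ℝ) ≤ n)]
    _ = ((n + 1) * r) ^ 2 := by ring

lemma isBounded_closedCube (c : Pt n) (r : ℝ) : Bornology.IsBounded (closedCube c r) := by
  refine isBounded_ball.subset ((?_ : _ ⊆ closedCube c (max r 1)).trans
    (closedCube_subset_ball c (by positivity)))
  exact fun x hx i => ⟨(hx i).1, (hx i).2.trans (by gcongr; exact le_max_left r 1)⟩

lemma ncov_le_card {s : Finset (Pt n)} (hs : E ⊆ ⋃ c ∈ s, closedCube c r) : Ncov r E ≤ s.card :=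
  Nat.sInf_le ⟨s, rfl, hs⟩

lemma exists_finset_card_eq_ncov (hr : 0 < r) (hE : Bornology.IsBounded E) :
    ∃ s : Finset (Pt n), s.card = Ncov r E ∧ E ⊆ ⋃ c ∈ s, closedCube c r := by
  obtain ⟨R, hR⟩ := hE.subset_ball 0
  obtain ⟨s, -, hs⟩ := exists_finset_closedCube_cover _ (2 * R) hr
  have hne : {m | ∃ s : Finset (Pt n), s.card = m ∧ E ⊆ ⋃ c ∈ s, closedCube c r}.Nonempty :=
    ⟨s.card, s, rfl, (hR.trans (ball_subset_closedCube 0 R)).trans hs⟩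
  exact Nat.sInf_mem hne

lemma ncov_mono (hr : 0 < r) (hF : Bornology.IsBounded F) (h : E ⊆ F) : Ncov r E ≤ Ncov r F := by
  obtain ⟨s, hcard, hs⟩ := exists_finset_card_eq_ncov hr hF
  exact hcard ▸ ncov_le_card (h.trans hs)

lemma card_le_ncov_of_separated {ι : Type*} [Fintype ι] (hr : 0 < r)
    (hE : Bornology.IsBounded E) {p : ι → Pt n} (hp : ∀ k, p k ∈ E)
    (hsep : Pairwise fun j k => ∃ i, r < |p j i - p k i|) : Fintype.card ι ≤ Ncov r E := by
  obtain ⟨s, hcard, hs⟩ := exists_finset_card_eq_ncov hr hE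
  rw [← hcard, ← Finset.card_univ]
  refine Finset.card_le_card_of_forall_subsingleton (fun k c => p k ∈ closedCube c r)
    (fun k _ => by simpa only [mem_iUnion, exists_prop] using hs (hp k)) ?_
  rintro c _ j ⟨-, hj⟩ k ⟨-, hk⟩
  by_contra hjk
  obtain ⟨i, hi⟩ := hsep hjk
  exact hi.not_ge <| abs_le.2 ⟨by linarith [(hj i).1, (hk i).2], by linarith [(hj i).2, (hk i).1]⟩

lemma ncov_inter_ball_le (E : Set (Pt n)) (x : Pt n) (hr : 0 < r) (hrR : r ≤ R) :
    (Ncov r (E ∩ ball x R) : ℝ) ≤ 3 ^ n * (R / r) ^ (n : ℝ) := by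
  obtain ⟨s, hcard, hs⟩ := exists_finset_closedCube_cover _ (2 * R) hr
  have hcov : Ncov r (E ∩ ball x R) ≤ (⌊2 * R / r⌋₊ + 1) ^ n :=
    (ncov_le_card (inter_subset_right.trans ((ball_subset_closedCube x R).trans hs))).trans hcard
  have one_le : 1 ≤ R / r := (one_le_div₀ hr).2 hrR
  have floor_le : (⌊2 * R / r⌋₊ : ℝ) ≤ 2 * (R / r) := by
    rw [mul_div_assoc]
    exact Nat.floor_le (by linarith)
  calc (Ncov r (E ∩ ball x R) : ℝ) ≤ (⌊2 * R / r⌋₊ + 1) ^ n := mod_cast hcov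
    _ ≤ (3 * (R / r)) ^ n := by gcongr; linarith
    _ = 3 ^ n * (R / r) ^ (n : ℝ) := by rw [mul_pow, Real.rpow_natCast]

end Covering

section GrowthExponent

variable {n : ℕ} {E : Set (Pt n)} {C N s t : ℝ}

/-- The ratios `log N_cov(r, E ∩ B) / log (r_B / r)` at all scales, over balls with `r_B ≥ N r`:
the set whose supremum enters `dimGlob`, i.e. `locRatios` without an upper bound on `r_B`. -/
def globRatios (E : Set (Pt n)) (N : ℝ) : Set ℝ :=
  {d | ∃ r : ℝ, 0 < r ∧ ∃ (x : Pt n) (rB : ℝ), 0 < rB ∧ N * r ≤ rB ∧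
    d = Real.log (Ncov r (E ∩ ball x rB)) / Real.log (rB / r)}

lemma log_mul_rpow_div_log (hC : 0 < C) (ht : 1 < t) :
    Real.log (C * t ^ s) / Real.log t = s + Real.log C / Real.log t := by
  have ht₀ : 0 < t := one_pos.trans ht
  have hlog : Real.log t ≠ 0 := (Real.log_pos ht).ne'
  rw [Real.log_mul hC.ne' (Real.rpow_pos_of_pos ht₀ s).ne', Real.log_rpow ht₀]
  field_simp
  ring

lemma tendsto_add_div_log (s c : ℝ) :
    Tendsto (fun t => s + c / Real.log t) atTop (nhds s) := by
  simpa only [add_zero] using (Real.tendsto_log_atTop.const_div_atTop c).const_add s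

lemma nonneg_of_mem_globRatios {d : ℝ} (hN : 1 ≤ N) (hd : d ∈ globRatios E N) : 0 ≤ d := by
  obtain ⟨r, hr, x, R, -, hR, rfl⟩ := hd
  exact div_nonneg (Real.log_natCast_nonneg _)
    (Real.log_nonneg (hN.trans ((le_div_iff₀ hr).2 hR)))

lemma mem_upperBounds_globRatios (hC : 1 ≤ C) (hs : 0 ≤ s)
    (h : ∀ (x : Pt n) (r R : ℝ), 0 < r → r ≤ R → Ncov r (E ∩ ball x R) ≤ C * (R / r) ^ s)
    (hN : 1 < N) : s + Real.log C / Real.log N ∈ upperBounds (globRatios E N) := by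
  rintro _ ⟨r, hr, x, R, -, hR, rfl⟩
  have hNt : N ≤ R / r := (le_div_iff₀ hr).2 hR
  have ht : 1 < R / r := hN.trans_le hNt
  have one_le : 1 ≤ C * (R / r) ^ s :=
    one_le_mul_of_one_le_of_one_le hC (Real.one_le_rpow ht.le hs)
  have log_ncov_le : Real.log (Ncov r (E ∩ ball x R)) ≤ Real.log (C * (R / r) ^ s) := by
    rcases (Ncov r (E ∩ ball x R)).eq_zero_or_pos with hzero | hpos
    · simpa only [hzero, Nat.cast_zero, Real.log_zero] using Real.log_nonneg one_le
    · exact Real.log_le_log (mod_cast hpos) (h x r R hr ((one_le_div₀ hr).1 ht.le))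
  calc Real.log (Ncov r (E ∩ ball x R)) / Real.log (R / r)
      ≤ Real.log (C * (R / r) ^ s) / Real.log (R / r) := by
        gcongr
        exact Real.log_nonneg ht.le
    _ = s + Real.log C / Real.log (R / r) := log_mul_rpow_div_log (one_pos.trans_le hC) ht
    _ ≤ s + Real.log C / Real.log N := by
        have := Real.log_pos hN
        have := Real.log_nonneg hC
        gcongr

lemma sSup_globRatios_eventuallyLE (hC : 1 ≤ C) (hs : 0 ≤ s)
    (h : ∀ (x : Pt n) (r R : ℝ), 0 < r → r ≤ R → Ncov r (E ∩ ball x R) ≤ C * (R / r) ^ s) :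
    (fun N => sSup (globRatios E N)) ≤ᶠ[atTop] fun N => s + Real.log C / Real.log N := by
  filter_upwards [eventually_gt_atTop 1] with N hN
  exact Real.sSup_le (mem_upperBounds_globRatios hC hs h hN)
    (add_nonneg hs (div_nonneg (Real.log_nonneg hC) (Real.log_nonneg hN.le)))

theorem dimGlob_le_of_ncov_le (hC : 1 ≤ C) (hs : 0 ≤ s)
    (h : ∀ (x : Pt n) (r R : ℝ), 0 < r → r ≤ R → Ncov r (E ∩ ball x R) ≤ C * (R / r) ^ s) :
    dimGlob E ≤ s := by
  have hlim := tendsto_add_div_log s (Real.log C)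
  have hbdd : IsBoundedUnder (· ≥ ·) atTop fun N => sSup (globRatios E N) :=
    isBoundedUnder_of_eventually_ge <| (eventually_ge_atTop 1).mono fun _ hN =>
      Real.sSup_nonneg fun _ => nonneg_of_mem_globRatios hN
  calc dimGlob E ≤ liminf (fun N => s + Real.log C / Real.log N) atTop :=
        liminf_le_liminf (sSup_globRatios_eventuallyLE hC hs h) hbdd hlim.isCoboundedUnder_ge
    _ = s := hlim.liminf_eq

theorem dimGlob_le_natCast (E : Set (Pt n)) : dimGlob E ≤ n :=
  dimGlob_le_of_ncov_le (one_le_pow₀ (by norm_num)) n.cast_nonneg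
    fun x _ _ => ncov_inter_ball_le E x

lemma bddAbove_globRatios (hN : 1 < N) : BddAbove (globRatios E N) :=
  ⟨_, mem_upperBounds_globRatios (one_le_pow₀ (by norm_num)) n.cast_nonneg
    (fun x _ _ => ncov_inter_ball_le E x) hN⟩

lemma isBoundedUnder_sSup_globRatios (E : Set (Pt n)) :
    IsBoundedUnder (· ≤ ·) atTop fun N => sSup (globRatios E N) :=
  (tendsto_add_div_log _ _).isBoundedUnder_le.mono_le <|
    sSup_globRatios_eventuallyLE (one_le_pow₀ (by norm_num)) n.cast_nonneg
      fun x _ _ => ncov_inter_ball_le E x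

theorem le_dimGlob_of_le_ncov {ι : Type*} {l : Filter ι} [l.NeBot] {x : ι → Pt n} {r R : ι → ℝ}
    (hr : ∀ k, 0 < r k) (hR : Tendsto (fun k => R k / r k) l atTop) (hC : 0 < C)
    (h : ∀ᶠ k in l, C * (R k / r k) ^ s ≤ Ncov (r k) (E ∩ ball (x k) (R k))) :
    s ≤ dimGlob E := by
  have le_sSup (N : ℝ) (hN : 1 < N) : s ≤ sSup (globRatios E N) := by
    refine le_of_tendsto ((tendsto_add_div_log s (Real.log C)).comp hR) ?_
    filter_upwards [h, hR.eventually_ge_atTop N] with k hk hNk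
    have ht : 1 < R k / r k := hN.trans_le hNk
    have ht₀ : 0 < R k / r k := one_pos.trans ht
    calc s + Real.log C / Real.log (R k / r k)
        = Real.log (C * (R k / r k) ^ s) / Real.log (R k / r k) :=
          (log_mul_rpow_div_log hC ht).symm
      _ ≤ Real.log (Ncov (r k) (E ∩ ball (x k) (R k))) / Real.log (R k / r k) := by
          have := Real.log_nonneg ht.le
          gcongr
      _ ≤ sSup (globRatios E N) :=
          le_csSup (bddAbove_globRatios hN) ⟨r k, hr k, x k, R k,
            (div_pos_iff_of_pos_right (hr k)).1 ht₀, (le_div_iff₀ (hr k)).1 hNk, rfl⟩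
  exact le_liminf_of_le (isBoundedUnder_sSup_globRatios E).isCoboundedUnder_ge
    ((eventually_gt_atTop 1).mono le_sSup)

end GrowthExponent

/-- The lattice `ℕⁿ` of the paper, where `0 ∉ ℕ`. -/
def natLattice (n : ℕ) : Set (Pt n) :=
  {x | ∀ i, ∃ m : ℕ, 0 < m ∧ x i = m}

lemma pow_le_ncov_natLattice_inter_closedCube (n K : ℕ) {r : ℝ} (hr : 0 < r) (hr₁ : r < 1) :
    K ^ n ≤ Ncov r (natLattice n ∩ closedCube 0 K) := by
  let p (f : Fin n → Fin K) : Pt n := WithLp.toLp 2 fun i => ((f i + 1 : ℕ) : ℝ)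
  have hp (f : Fin n → Fin K) : p f ∈ natLattice n ∩ closedCube 0 K :=
    ⟨fun i => ⟨f i + 1, Nat.succ_pos _, rfl⟩,
      fun i => ⟨Nat.cast_nonneg _, by simpa [p] using mod_cast (f i).2⟩⟩
  have hsep : Pairwise fun f g => ∃ i, r < |p f i - p g i| := fun f g hfg => by
    obtain ⟨i, hi⟩ := Function.ne_iff.1 hfg
    have hne : ((f i : ℕ) : ℤ) - (g i : ℕ) ≠ 0 := by omega
    have one_le : (1 : ℝ) ≤ |((f i : ℕ) : ℝ) - (g i : ℕ)| := by
      exact_mod_cast Int.one_le_abs hne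
    exact ⟨i, hr₁.trans_le (by simpa [p] using one_le)⟩
  have hbdd : Bornology.IsBounded (natLattice n ∩ closedCube 0 K) :=
    (isBounded_closedCube 0 K).subset inter_subset_right
  simpa using card_le_ncov_of_separated hr hbdd hp hsep

lemma pow_le_ncov_natLattice_inter_ball (n : ℕ) {K : ℕ} (hK : 0 < K) {r : ℝ} (hr : 0 < r)
    (hr₁ : r < 1) : K ^ n ≤ Ncov r (natLattice n ∩ ball 0 ((n + 1) * K)) :=
  (pow_le_ncov_natLattice_inter_closedCube n K hr hr₁).trans <|
    ncov_mono hr (isBounded_ball.subset inter_subset_right) <|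
      inter_subset_inter_right _ (closedCube_subset_ball 0 (mod_cast hK))

/-- `dim_LG (ℕⁿ) = n`, where `ℕⁿ` is the set of lattice points with positive
integer coordinates. -/
theorem dimGlob_natLattice (n : ℕ) (hn : 1 ≤ n) :
    dimGlob {x : Pt n | ∀ i, ∃ m : ℕ, 0 < m ∧ x i = (m : ℝ)} = (n : ℝ) := by
  change dimGlob (natLattice n) = n
  refine le_antisymm (dimGlob_le_natCast _) ?_
  have ratio_eq (K : ℕ) : (n + 1) * (K : ℝ) / (1 / 2) = 2 * (n + 1) * K := by ring
  have ratio_tendsto : Tendsto (fun K : ℕ => (n + 1) * (K : ℝ) / (1 / 2)) atTop atTop := by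
    simp only [ratio_eq]
    exact tendsto_natCast_atTop_atTop.const_mul_atTop (by positivity)
  refine le_dimGlob_of_le_ncov (x := fun _ => 0) (C := ((2 * (n + 1) : ℝ) ^ n)⁻¹)
    (fun _ => by norm_num) ratio_tendsto (by positivity) ?_
  filter_upwards [eventually_gt_atTop 0] with K hK
  calc ((2 * (n + 1) : ℝ) ^ n)⁻¹ * ((n + 1) * K / (1 / 2)) ^ (n : ℝ) = K ^ n := by
        rw [ratio_eq, Real.rpow_natCast, mul_pow _ (K : ℝ), inv_mul_cancel_left₀ (by positivity)]
    _ ≤ Ncov (1 / 2) (natLattice n ∩ ball 0 ((n + 1) * K)) :=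
        mod_cast pow_le_ncov_natLattice_inter_ball n hK (by norm_num) (by norm_num)

end
end

section
/- Let n ≥ 1 and θ ∈ [0,1]. Then the local self-similar Minkowski dimension of the n-fold product (2^{ℕ_θ})ⁿ satisfies dim_L((2^{ℕ_θ})ⁿ) = 0. -/
/-!
The points of `(2^{ℕ_θ})ⁿ` have integer coordinates, so they are uniformly separated and a ball of
radius at most `1` contains at most `K` of them, with `K` depending only on `n`. Covering each of
these points by its own cube bounds every covering number by `K`, uniformly in `r`, whereas
`r_B / r ≥ N`; hence all the ratios lie in `[0, log K / log N]`, an interval that shrinks to `{0}`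
as `N → ∞`.
-/

open MeasureTheory Metric Filter Set ENNReal NNReal

noncomputable section

/-- The set `2^{ℕ_θ} = ⋃_{k ≥ 0} {2^k, 2^k + 1, …, 2^k + 2^⌊θk⌋} ⊆ ℕ`. -/
def twoNTheta (θ : ℝ) : Set ℕ :=
  {m : ℕ | ∃ k : ℕ, 2 ^ k ≤ m ∧ m ≤ 2 ^ k + 2 ^ (Nat.floor (θ * k))}

open scoped Topology

lemma log_natCast_le_log_natCast {a b : ℕ} (h : a ≤ b) : Real.log a ≤ Real.log b := by
  rcases a.eq_zero_or_pos with rfl | ha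
  · simpa using Real.log_natCast_nonneg b
  · exact Real.log_le_log (by exact_mod_cast ha) (by exact_mod_cast h)

lemma limsup_mem_Icc_of_eventually_mem_Icc {ι α : Type*} [ConditionallyCompleteLinearOrder α]
    {l : Filter ι} [l.NeBot] {u : ι → α} {a b : α} (h : ∀ᶠ i in l, u i ∈ Icc a b) :
    limsup u l ∈ Icc a b := by
  have hge : ∀ᶠ i in l, a ≤ u i := h.mono fun _ hi => hi.1
  have hle : ∀ᶠ i in l, u i ≤ b := h.mono fun _ hi => hi.2
  exact ⟨le_limsup_of_frequently_le hge.frequently (isBoundedUnder_of_eventually_le hle),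
    limsup_le_of_le (isBoundedUnder_of_eventually_ge hge).isCoboundedUnder_le hle⟩

lemma isSeparated_range_natCast {ε : ℝ≥0∞} (hε : ε < 1) :
    IsSeparated ε (range ((↑) : ℕ → ℝ)) := by
  rintro _ ⟨a, rfl⟩ _ ⟨b, rfl⟩ hab
  have hdist : 1 ≤ dist (a : ℝ) b :=
    Nat.pairwise_one_le_dist (ne_of_apply_ne _ hab)
  calc ε < 1 := hε
    _ ≤ edist (a : ℝ) b := by rwa [edist_dist, ENNReal.one_le_ofReal]

lemma isSeparated_piLp {ι : Type*} [Fintype ι] {p : ℝ≥0∞} [Fact (1 ≤ p)] {α : ι → Type*}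
    [∀ i, PseudoEMetricSpace (α i)] {s : ∀ i, Set (α i)} {ε : ℝ≥0∞}
    (hs : ∀ i, IsSeparated ε (s i)) : IsSeparated ε {x : PiLp p α | ∀ i, x i ∈ s i} := by
  intro x hx y hy hxy
  obtain ⟨i, hi⟩ : ∃ i, x i ≠ y i := by
    contrapose! hxy
    exact PiLp.ext hxy
  exact (hs i (hx i) (hy i) hi).trans_le (PiLp.edist_apply_le x y i)

lemma isSeparated_natCast_coords {n : ℕ} (S : Set ℕ) {ε : ℝ≥0∞} (hε : ε < 1) :
    IsSeparated ε {x : Pt n | ∀ i, ∃ m ∈ S, x i = (m : ℝ)} := by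
  have hsep : IsSeparated ε {x : Pt n | ∀ i, x i ∈ range Nat.cast} :=
    isSeparated_piLp fun _ => isSeparated_range_natCast hε
  have hsub : {x : Pt n | ∀ i, ∃ m ∈ S, x i = (m : ℝ)} ⊆ {x | ∀ i, x i ∈ range Nat.cast} := by
    intro x hx i
    obtain ⟨m, -, hm⟩ := hx i
    exact ⟨m, hm.symm⟩
  exact hsep.subset hsub

lemma coveringNumber_ball_ne_top {X : Type*} [PseudoMetricSpace X] [ProperSpace X] {ε : ℝ≥0}
    (hε : ε ≠ 0) (x : X) (R : ℝ) : coveringNumber ε (ball x R) ≠ ⊤ := by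
  obtain ⟨C, hsub, hfin, hcover⟩ :=
    exists_finite_isCover_of_isCompact_closure hε
      (isBounded_ball (x := x) (r := R)).isCompact_closure
  exact ((hcover.coveringNumber_le_encard hsub).trans_lt hfin.encard_lt_top).ne

lemma coveringNumber_ball_eq {V : Type*} [SeminormedAddCommGroup V] (ε : ℝ≥0) (x y : V) (R : ℝ) :
    coveringNumber ε (ball x R) = coveringNumber ε (ball y R) := by
  let e := IsometryEquiv.addLeft (x - y)
  have himage : e '' ball y R = ball x R := by simp [e]
  rw [← himage, e.isometry.coveringNumber_image' e.injective.injOn]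

lemma exists_encard_inter_ball_le_of_isSeparated {V : Type*} [SeminormedAddCommGroup V]
    [ProperSpace V] {E : Set V} {ε : ℝ≥0} (hε : ε ≠ 0) (hE : IsSeparated ε E) (R : ℝ) :
    ∃ K : ℕ, ∀ x, (E ∩ ball x R).encard ≤ K := by
  obtain ⟨K, hK⟩ := ENat.ne_top_iff_exists.1
    (coveringNumber_ball_ne_top (half_pos hε.bot_lt).ne' (0 : V) R)
  refine ⟨K, fun x => ?_⟩
  calc (E ∩ ball x R).encard
      ≤ packingNumber ε (ball x R) :=
        (hE.subset inter_subset_left).encard_le_packingNumber inter_subset_right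
    _ = packingNumber (2 * (ε / 2)) (ball x R) := by rw [mul_div_cancel₀ ε two_ne_zero]
    _ ≤ externalCoveringNumber (ε / 2) (ball x R) :=
        packingNumber_two_mul_le_externalCoveringNumber _ _
    _ ≤ coveringNumber (ε / 2) (ball x R) := externalCoveringNumber_le_coveringNumber _ _
    _ = K := by rw [coveringNumber_ball_eq _ x 0, hK]

lemma Ncov_le_of_encard_le {n : ℕ} {E : Set (Pt n)} {r : ℝ} (hr : 0 ≤ r) {K : ℕ}
    (hE : E.encard ≤ K) : Ncov r E ≤ K := by
  have hfin : E.Finite := finite_of_encard_le_coe hE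
  have hcover : E ⊆ ⋃ c ∈ hfin.toFinset, closedCube c r := fun y hy =>
    mem_iUnion₂.2 ⟨y, hfin.mem_toFinset.2 hy, fun _ => ⟨le_rfl, le_add_of_nonneg_right hr⟩⟩
  calc Ncov r E ≤ hfin.toFinset.card := Nat.sInf_le ⟨_, rfl, hcover⟩
    _ ≤ K := by rwa [hfin.encard_eq_coe_toFinset_card, Nat.cast_le] at hE

section BoundedLocalCardinality

variable {n K : ℕ} {E : Set (Pt n)} {R : ℝ}

lemma locRatios_subset_Icc (hE : ∀ x, (E ∩ ball x R).encard ≤ K) {N r : ℝ} (hN : 1 < N)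
    (hr : 0 < r) : locRatios E N r R ⊆ Icc 0 (Real.log K / Real.log N) := by
  rintro _ ⟨x, rB, -, hNr, hR, rfl⟩
  have hlogN : 0 < Real.log N := Real.log_pos hN
  have hden : Real.log N ≤ Real.log (rB / r) :=
    Real.log_le_log (zero_lt_one.trans hN) ((le_div_iff₀ hr).2 hNr)
  have hcard : (E ∩ ball x rB).encard ≤ K :=
    (encard_le_encard (inter_subset_inter_right E (ball_subset_ball hR))).trans (hE x)
  have hnum : Real.log (Ncov r (E ∩ ball x rB)) ≤ Real.log K :=
    log_natCast_le_log_natCast (Ncov_le_of_encard_le hr.le hcard)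
  exact ⟨div_nonneg (Real.log_natCast_nonneg _) (hlogN.le.trans hden),
    div_le_div₀ (Real.log_natCast_nonneg K) hnum hlogN hden⟩

lemma limsup_sSup_locRatios_mem_Icc (hE : ∀ x, (E ∩ ball x R).encard ≤ K) {N : ℝ} (hN : 1 < N) :
    limsup (fun r => sSup (locRatios E N r R)) (𝓝[>] 0) ∈ Icc 0 (Real.log K / Real.log N) := by
  refine limsup_mem_Icc_of_eventually_mem_Icc ?_
  filter_upwards [self_mem_nhdsWithin] with r hr
  have hsub := locRatios_subset_Icc hE hN hr
  have hbound : 0 ≤ Real.log K / Real.log N :=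
    div_nonneg (Real.log_natCast_nonneg K) (Real.log_pos hN).le
  exact ⟨Real.sSup_nonneg fun d hd => (hsub hd).1,
    Real.sSup_le (fun d hd => (hsub hd).2) hbound⟩

theorem dimLoc_twoNTheta_general (hE : ∀ x, (E ∩ ball x 1).encard ≤ K) : dimLoc E = 0 := by
  have hlim : Tendsto (fun N : ℝ => Real.log K / Real.log N) atTop (𝓝 0) :=
    Real.tendsto_log_atTop.const_div_atTop _
  have hmem := (eventually_gt_atTop (1 : ℝ)).mono fun N hN => limsup_sSup_locRatios_mem_Icc hE hN
  exact (tendsto_of_tendsto_of_tendsto_of_le_of_le' tendsto_const_nhds hlim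
    (hmem.mono fun _ h => h.1) (hmem.mono fun _ h => h.2)).liminf_eq

end BoundedLocalCardinality

/-- `dim_L ((2^{ℕ_θ})ⁿ) = 0` for `θ ∈ [0,1]`. -/
theorem dimLoc_twoNTheta (n : ℕ) (hn : 1 ≤ n) (θ : ℝ) (hθ : θ ∈ Icc (0:ℝ) 1) :
    dimLoc {x : Pt n | ∀ i, ∃ m ∈ twoNTheta θ, x i = (m : ℝ)} = 0 := by
  obtain ⟨K, hK⟩ := exists_encard_inter_ball_le_of_isSeparated (ε := 1 / 2) (by norm_num)
    (isSeparated_natCast_coords (twoNTheta θ) (by norm_num)) 1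
  exact dimLoc_twoNTheta_general hK

end
end
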